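/- arXiv:1704.03184 — 14 statements merged into one kernel-verified Lean document; each statement's English description precedes it below -/
import Mathlib

section
/- Let (E, (J-R)Q) be a DH matrix pair of real n×n matrices. Then the pencil z E - (J-R)Q is singular (i.e., det(λ • Eℂ - ((J-R)*Q)ℂ) = 0 for every λ ∈ ℂ) if and only if there exists a nonzero vector x ∈ ℂⁿ with Eℂ x = 0 and ((J-R)*Q)ℂ x = 0, i.e., the nullspaces of E and (J-R)Q intersect nontrivially. -/
open Matrix

/-!
Evaluating the pencil at the real point `z = 1` suffices. If `det (E - (J - R) Q) = 0`, there is a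
real `x ≠ 0` with `E x = (J - R) Q x`. Pairing with `Q x` removes the skew part `J` and gives
`xᵀ Qᵀ E x = -(Q x)ᵀ R (Q x)`; the left side is nonnegative and the right side nonpositive, so
both vanish. Semidefiniteness of `Qᵀ E` then gives `Qᵀ E x = 0`, hence `E x = 0` because `Q` is
invertible, and so `(J - R) Q x = E x = 0`. The converse is immediate.
-/

/-- The dissipation argument: a real null vector of the pencil at `z = 1` is a null vector of `E`. -/
lemma dh_mulVec_eq_zero {n : ℕ} (E J R Q : Matrix (Fin n) (Fin n) ℝ)
    (hJ : Jᵀ = -J) (hR : R.PosSemidef) (hQ : IsUnit Q) (hQE : (Qᵀ * E).PosSemidef)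
    (x : Fin n → ℝ) (hx : E *ᵥ x = ((J - R) * Q) *ᵥ x) : E *ᵥ x = 0 := by
  have h1 : x ⬝ᵥ ((Qᵀ * E) *ᵥ x) = (Q *ᵥ x) ⬝ᵥ (E *ᵥ x) := by
    rw [← mulVec_mulVec, dotProduct_mulVec, vecMul_transpose]
  have hskew : (Q *ᵥ x) ⬝ᵥ (J *ᵥ (Q *ᵥ x)) = 0 := by
    have h : (Q *ᵥ x) ⬝ᵥ (J *ᵥ (Q *ᵥ x)) = -((Q *ᵥ x) ⬝ᵥ (J *ᵥ (Q *ᵥ x))) := by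
      conv_lhs => rw [dotProduct_mulVec, ← mulVec_transpose, hJ, neg_mulVec, neg_dotProduct,
        dotProduct_comm]
    linarith
  have hRn : 0 ≤ (Q *ᵥ x) ⬝ᵥ (R *ᵥ (Q *ᵥ x)) := by
    simpa using hR.dotProduct_mulVec_nonneg (Q *ᵥ x)
  have hEn : 0 ≤ x ⬝ᵥ ((Qᵀ * E) *ᵥ x) := by
    simpa using hQE.dotProduct_mulVec_nonneg x
  have h2 : (Q *ᵥ x) ⬝ᵥ (E *ᵥ x) = -((Q *ᵥ x) ⬝ᵥ (R *ᵥ (Q *ᵥ x))) := by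
    rw [hx, ← mulVec_mulVec, sub_mulVec, dotProduct_sub, hskew, zero_sub]
  have h3 : (Qᵀ * E) *ᵥ x = 0 := by
    refine (hQE.dotProduct_mulVec_zero_iff x).1 ?_
    simp only [star_trivial]
    linarith
  have hQt : IsUnit Qᵀ := (isUnit_transpose Q).2 hQ
  apply mulVec_injective_of_isUnit hQt
  simpa using h3

/-- For a DH matrix pair `(E, (J-R)Q)`, the pencil `z E - (J-R)Q` is singular if and only if
the nullspaces of `E` and `(J-R)Q` intersect nontrivially. -/
theorem dh_pair_singular_iff_common_nullspace {n : ℕ}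
    (E J R Q : Matrix (Fin n) (Fin n) ℝ)
    (hJ : Jᵀ = -J) (hR : R.PosSemidef) (hQ : IsUnit Q)
    (hQE : (Qᵀ * E).PosSemidef) :
    (∀ z : ℂ, (z • E.map (algebraMap ℝ ℂ) - ((J - R) * Q).map (algebraMap ℝ ℂ)).det = 0) ↔
      ∃ x : Fin n → ℂ, x ≠ 0 ∧ E.map (algebraMap ℝ ℂ) *ᵥ x = 0 ∧
        ((J - R) * Q).map (algebraMap ℝ ℂ) *ᵥ x = 0 := by
  constructor
  · intro h
    have hdet : (E - (J - R) * Q).det = 0 := by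
      apply (algebraMap ℝ ℂ).injective
      rw [RingHom.map_det, map_zero, map_sub]
      simpa only [one_smul, RingHom.mapMatrix_apply] using h 1
    obtain ⟨x, hx0, hx⟩ := exists_mulVec_eq_zero_iff.2 hdet
    rw [sub_mulVec, sub_eq_zero] at hx
    have hE := dh_mulVec_eq_zero E J R Q hJ hR hQ hQE x hx
    have hA := hx.symm.trans hE
    -- A real null vector complexifies entrywise.
    have key : ∀ M : Matrix (Fin n) (Fin n) ℝ, M *ᵥ x = 0 →
        M.map (algebraMap ℝ ℂ) *ᵥ (algebraMap ℝ ℂ ∘ x) = 0 := by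
      intro M hM
      ext i
      rw [← RingHom.map_mulVec, hM]
      simp
    refine ⟨algebraMap ℝ ℂ ∘ x, fun h0 => hx0 ?_, key _ hE, key _ hA⟩
    ext i
    simpa using congrFun h0 i
  · rintro ⟨x, hx0, hE, hA⟩ z
    refine exists_mulVec_eq_zero_iff.1 ⟨x, hx0, ?_⟩
    rw [sub_mulVec, smul_mulVec, hE, hA, smul_zero, sub_zero]
end

section
/- Let (E, (J-R)Q) be a DH matrix pair of real n×n matrices whose dissipation matrix R is positive definite. Then the pair is regular, i.e., there exists λ ∈ ℂ with det(λ • Eℂ - ((J-R)*Q)ℂ) ≠ 0. -/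
open Matrix

/-! The value `z = 0` already works: `J - R` is invertible because `xᵀ (J - R) x = -xᵀ R x < 0`
for every real `x ≠ 0` (the skew-symmetric part contributes nothing), and `Q` is invertible. -/

lemma skew_dotProduct_mulVec_self {n : ℕ} {J : Matrix (Fin n) (Fin n) ℝ} (hJ : Jᵀ = -J)
    (x : Fin n → ℝ) : x ⬝ᵥ (J *ᵥ x) = 0 := by
  have h : x ⬝ᵥ (J *ᵥ x) = -(x ⬝ᵥ (J *ᵥ x)) := by
    conv_lhs => rw [dotProduct_mulVec, ← mulVec_transpose, hJ, neg_mulVec, neg_dotProduct,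
      dotProduct_comm]
  linarith

lemma det_skew_sub_posDef_ne_zero {n : ℕ} {J R : Matrix (Fin n) (Fin n) ℝ}
    (hJ : Jᵀ = -J) (hR : R.PosDef) : (J - R).det ≠ 0 := by
  intro h
  obtain ⟨x, hx, hx0⟩ := exists_mulVec_eq_zero_iff.mpr h
  have hpos : 0 < x ⬝ᵥ (R *ᵥ x) := by simpa using hR.dotProduct_mulVec_pos hx
  have hzero : x ⬝ᵥ ((J - R) *ᵥ x) = 0 := by rw [hx0, dotProduct_zero]
  rw [sub_mulVec, dotProduct_sub, skew_dotProduct_mulVec_self hJ] at hzero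
  linarith

/-- A DH matrix pair with positive definite dissipation matrix is regular. -/
theorem dh_pair_posdef_dissipation_regular {n : ℕ}
    (E J R Q : Matrix (Fin n) (Fin n) ℝ)
    (hJ : Jᵀ = -J) (hR : R.PosDef) (hQ : IsUnit Q)
    (hQE : (Qᵀ * E).PosSemidef) :
    ∃ z : ℂ, (z • E.map (algebraMap ℝ ℂ) - ((J - R) * Q).map (algebraMap ℝ ℂ)).det ≠ 0 := by
  refine ⟨0, ?_⟩
  have hdet : ((J - R) * Q).det ≠ 0 := by
    rw [det_mul]
    exact mul_ne_zero (det_skew_sub_posDef_ne_zero hJ hR)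
      ((isUnit_iff_isUnit_det Q).mp hQ).ne_zero
  have hmap : (((J - R) * Q).map (algebraMap ℝ ℂ)).det
      = algebraMap ℝ ℂ ((J - R) * Q).det :=
    (RingHom.map_det (algebraMap ℝ ℂ) _).symm
  rw [zero_smul, zero_sub, det_neg, hmap]
  exact mul_ne_zero (pow_ne_zero _ (by norm_num))
    ((map_ne_zero (algebraMap ℝ ℂ)).mpr hdet)
end

section
/- Let (E, (J-R)Q) be a regular DH matrix pair of real n×n matrices. Then every finite eigenvalue of the pencil z E - (J-R)Q lies in the closed left half of the complex plane: if λ ∈ ℂ and x ∈ ℂⁿ, x ≠ 0, satisfy (λ • Eℂ - ((J-R)*Q)ℂ) x = 0, then Re(λ) ≤ 0. -/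
/-!
Put `e = x* QᵀE x ≥ 0` and `y = Qx`. Multiplying `λEx = (J - R)Qx` on the left by `x* Qᵀ` gives
`λ e = y* J y - y* R y`, where `y* J y` is purely imaginary and `y* R y ≥ 0`; hence
`Re λ · e ≤ 0`. If `Re λ > 0`, then `e = 0`, so `QᵀE x = 0` by semidefiniteness and `Ex = 0` by
invertibility of `Q`. Then `(J - R)Qx = λEx = 0` as well, so `x` lies in the kernel of `zE - (J - R)Q`
for every `z`, contradicting regularity.
-/

open Matrix
open scoped ComplexOrder

/-- Real positive semidefiniteness survives complexification, because a Gram factorization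
`M = Bᵀ B` does. -/
lemma posSemidef_map_complex {n : ℕ} {M : Matrix (Fin n) (Fin n) ℝ} (hM : M.PosSemidef) :
    (M.map (algebraMap ℝ ℂ)).PosSemidef := by
  obtain ⟨B, rfl⟩ : ∃ B : Matrix (Fin n) (Fin n) ℝ, M = Bᴴ * B := by
    open scoped MatrixOrder in
    exact CStarAlgebra.nonneg_iff_eq_star_mul_self.mp hM.nonneg
  have h : (Bᴴ * B).map (algebraMap ℝ ℂ)
      = (B.map (algebraMap ℝ ℂ))ᴴ * B.map (algebraMap ℝ ℂ) := by
    rw [Matrix.map_mul]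
    congr 1
    ext i j
    simp
  rw [h]
  exact posSemidef_conjTranspose_mul_self _

lemma re_dotProduct_skew {n : ℕ} {J : Matrix (Fin n) (Fin n) ℝ} (hJ : Jᵀ = -J)
    (y : Fin n → ℂ) : (star y ⬝ᵥ (J.map (algebraMap ℝ ℂ) *ᵥ y)).re = 0 := by
  have hC : (J.map (algebraMap ℝ ℂ))ᴴ = -J.map (algebraMap ℝ ℂ) := by
    ext i j
    have := congrFun (congrFun hJ i) j
    simp only [transpose_apply] at this
    simp [this]
  have h : star (star y ⬝ᵥ (J.map (algebraMap ℝ ℂ) *ᵥ y))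
      = -(star y ⬝ᵥ (J.map (algebraMap ℝ ℂ) *ᵥ y)) := by
    rw [← star_dotProduct_star, star_star, star_mulVec, hC, ← dotProduct_mulVec,
      neg_mulVec, dotProduct_neg]
  have := congrArg Complex.re h
  simp only [Complex.star_def, Complex.conj_re, Complex.neg_re] at this
  linarith

/-- Every finite eigenvalue of the pencil associated with a regular DH matrix pair lies in the
closed left half of the complex plane. -/
theorem dh_pair_finite_eigenvalues_closed_left_halfplane {n : ℕ}
    (E J R Q : Matrix (Fin n) (Fin n) ℝ)
    (hJ : Jᵀ = -J) (hR : R.PosSemidef) (hQ : IsUnit Q)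
    (hQE : (Qᵀ * E).PosSemidef)
    (hreg : ∃ z : ℂ,
      (z • E.map (algebraMap ℝ ℂ) - ((J - R) * Q).map (algebraMap ℝ ℂ)).det ≠ 0) :
    ∀ (lam : ℂ) (x : Fin n → ℂ), x ≠ 0 →
      (lam • E.map (algebraMap ℝ ℂ) - ((J - R) * Q).map (algebraMap ℝ ℂ)) *ᵥ x = 0 →
      lam.re ≤ 0 := by
  intro lam x hx hlam
  by_contra! hpos
  obtain ⟨z, hz⟩ := hreg
  have hQE' := posSemidef_map_complex hQE
  have hR' := posSemidef_map_complex hR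
  have hAmap : ((J - R) * Q).map (algebraMap ℝ ℂ)
      = (J.map (algebraMap ℝ ℂ) - R.map (algebraMap ℝ ℂ)) * Q.map (algebraMap ℝ ℂ) := by
    rw [Matrix.map_mul, Matrix.map_sub _ (map_sub _)]
  have hQt : (Qᵀ).map (algebraMap ℝ ℂ) = (Q.map (algebraMap ℝ ℂ))ᴴ := by
    ext i j
    simp
  have hQu : IsUnit (Q.map (algebraMap ℝ ℂ)) :=
    hQ.map (algebraMap ℝ ℂ).mapMatrix
  rw [Matrix.map_mul, hQt] at hQE'
  rw [hAmap] at hlam hz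
  generalize hEc : E.map (algebraMap ℝ ℂ) = Ec at *
  generalize hQc : Q.map (algebraMap ℝ ℂ) = Qc at *
  have hJre := re_dotProduct_skew hJ (Qc *ᵥ x)
  generalize hJc : J.map (algebraMap ℝ ℂ) = Jc at *
  generalize hRc : R.map (algebraMap ℝ ℂ) = Rc at *
  have heig : lam • (Ec *ᵥ x) = ((Jc - Rc) * Qc) *ᵥ x := by
    rwa [sub_mulVec, smul_mulVec, sub_eq_zero] at hlam
  have hE0 := hQE'.dotProduct_mulVec_nonneg x
  have hR0 := hR'.dotProduct_mulVec_nonneg (Qc *ᵥ x)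
  -- the eigenvalue equation tested against `x* Qᴴ`
  have key : lam * (star x ⬝ᵥ ((Qcᴴ * Ec) *ᵥ x))
      = star (Qc *ᵥ x) ⬝ᵥ (Jc *ᵥ (Qc *ᵥ x)) - star (Qc *ᵥ x) ⬝ᵥ (Rc *ᵥ (Qc *ᵥ x)) := by
    rw [← mulVec_mulVec, dotProduct_mulVec, ← star_mulVec, ← smul_eq_mul, ← dotProduct_smul,
      heig, ← mulVec_mulVec, sub_mulVec, dotProduct_sub]
  have he : star x ⬝ᵥ ((Qcᴴ * Ec) *ᵥ x) = 0 := by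
    have hre := congrArg Complex.re key
    rw [Complex.le_def] at hE0 hR0
    obtain ⟨hE1, hE2⟩ := hE0
    simp only [Complex.zero_re, Complex.zero_im] at hE1 hE2 hR0
    rw [Complex.mul_re, ← hE2, Complex.sub_re, hJre] at hre
    apply Complex.ext
    · simp only [Complex.zero_re]
      nlinarith [hR0.1]
    · exact hE2.symm
  rw [hQE'.dotProduct_mulVec_zero_iff, ← mulVec_mulVec] at he
  have hEx : Ec *ᵥ x = 0 := by
    have hinj := mulVec_injective_of_isUnit hQu.star
    exact hinj (by rw [mulVec_zero]; exact he)
  rw [hEx, smul_zero] at heig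
  exact hz (exists_mulVec_eq_zero_iff.mp
    ⟨x, hx, by rw [sub_mulVec, smul_mulVec, hEx, ← heig, smul_zero, sub_zero]⟩)
end

section
/- Let (E, (J-R)Q) be a regular DH matrix pair of real n×n matrices and let λ ∈ ℂ be purely imaginary (Re(λ) = 0). Then λ is a finite eigenvalue of the pencil z E - (J-R)Q (i.e., there exists x ≠ 0 with (λ • Eℂ - ((J-R)*Q)ℂ) x = 0) if and only if there exists a nonzero x ∈ ℂⁿ with (λ • Eℂ - (J*Q)ℂ) x = 0 and (R*Q)ℂ x = 0, i.e., R Q x = 0 for some eigenvector x of the pencil z E - J Q associated with λ. -/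
open Matrix
open scoped ComplexOrder

/-!
Let `y = Q x`. If `lam E x = (J - R) Q x`, pairing with `y` gives
`y* R y = -(lam x* (Qᵀ E) x - y* J y)`. The left side is real, since `R` is symmetric; the right
side is purely imaginary, since `Qᵀ E` is symmetric, `lam` is imaginary and `J` is skew-symmetric.
Hence `y* R y = 0`, and positive semidefiniteness of `R` yields `R y = 0`, so that `x` is also an
eigenvector of `z E - J Q`. The converse is immediate from `(J - R) Q = J Q - R Q`.
-/

open scoped MatrixOrder in
/-- Positive semidefiniteness survives complexification, by factoring `R = Bᵀ B` over `ℝ`. -/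
lemma posSemidef_map_complex_s4 {n : ℕ} {R : Matrix (Fin n) (Fin n) ℝ} (hR : R.PosSemidef) :
    (R.map (algebraMap ℝ ℂ)).PosSemidef := by
  obtain ⟨B, rfl⟩ := CStarAlgebra.nonneg_iff_eq_star_mul_self.mp hR.nonneg
  have h : (star B * B).map (algebraMap ℝ ℂ)
      = (B.map (algebraMap ℝ ℂ))ᴴ * B.map (algebraMap ℝ ℂ) := by
    rw [Matrix.map_mul]
    congr 1
    ext i j
    simp [star_eq_conjTranspose]
  rw [h]
  exact posSemidef_conjTranspose_mul_self _

lemma conjTranspose_map_complex {n : ℕ} (M : Matrix (Fin n) (Fin n) ℝ) :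
    (M.map (algebraMap ℝ ℂ))ᴴ = Mᵀ.map (algebraMap ℝ ℂ) := by
  ext i j
  simp

lemma star_dotProduct_mulVec_self {n : ℕ} (M : Matrix (Fin n) (Fin n) ℂ) (x : Fin n → ℂ) :
    star (star x ⬝ᵥ (M *ᵥ x)) = star x ⬝ᵥ (Mᴴ *ᵥ x) := by
  rw [star_dotProduct, star_mulVec, ← dotProduct_mulVec, star_star]

/-- For a regular DH matrix pair, a purely imaginary `lam` is a finite eigenvalue of the pencil
`z E - (J-R)Q` if and only if `R Q x = 0` for some eigenvector `x` of the pencil `z E - J Q`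
associated with `lam`. -/
theorem dh_pair_imaginary_eigenvalue_iff {n : ℕ}
    (E J R Q : Matrix (Fin n) (Fin n) ℝ)
    (hJ : Jᵀ = -J) (hR : R.PosSemidef) (hQ : IsUnit Q)
    (hQE : (Qᵀ * E).PosSemidef)
    (hreg : ∃ z : ℂ,
      (z • E.map (algebraMap ℝ ℂ) - ((J - R) * Q).map (algebraMap ℝ ℂ)).det ≠ 0)
    (lam : ℂ) (hlam : lam.re = 0) :
    (∃ x : Fin n → ℂ, x ≠ 0 ∧
        (lam • E.map (algebraMap ℝ ℂ) - ((J - R) * Q).map (algebraMap ℝ ℂ)) *ᵥ x = 0) ↔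
      ∃ x : Fin n → ℂ, x ≠ 0 ∧
        (lam • E.map (algebraMap ℝ ℂ) - (J * Q).map (algebraMap ℝ ℂ)) *ᵥ x = 0 ∧
        (R * Q).map (algebraMap ℝ ℂ) *ᵥ x = 0 := by
  have hsub : ((J - R) * Q).map (algebraMap ℝ ℂ)
      = (J * Q).map (algebraMap ℝ ℂ) - (R * Q).map (algebraMap ℝ ℂ) := by
    rw [Matrix.sub_mul, Matrix.map_sub]
    exact fun a b => map_sub _ a b
  constructor
  · rintro ⟨x, hx, h⟩
    have hkey : (R * Q).map (algebraMap ℝ ℂ) *ᵥ x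
        = -((lam • E.map (algebraMap ℝ ℂ) - (J * Q).map (algebraMap ℝ ℂ)) *ᵥ x) := by
      rw [hsub, sub_sub_eq_add_sub, add_sub_right_comm, add_mulVec] at h
      exact eq_neg_of_add_eq_zero_right h
    have hRQ : (R * Q).map (algebraMap ℝ ℂ) *ᵥ x = 0 := by
      set Ec := E.map (algebraMap ℝ ℂ) with hEc
      set Jc := J.map (algebraMap ℝ ℂ) with hJc
      set Rc := R.map (algebraMap ℝ ℂ) with hRc
      set Qc := Q.map (algebraMap ℝ ℂ) with hQc
      have hRpos : Rc.PosSemidef := posSemidef_map_complex_s4 hR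
      have hJs : Jcᴴ = -Jc := by
        rw [hJc, conjTranspose_map_complex, hJ]
        ext i j
        simp
      have hEs : (Qcᴴ * Ec)ᴴ = Qcᴴ * Ec := by
        have := (posSemidef_map_complex_s4 hQE).isHermitian
        rwa [Matrix.map_mul, ← conjTranspose_map_complex] at this
      have hl : star lam = -lam := by
        apply Complex.ext <;> simp [hlam]
      rw [Matrix.map_mul, Matrix.map_mul] at hkey
      rw [Matrix.map_mul]
      -- `S` is the skew-Hermitian form whose value at `x` is `-(y* R y)`.
      set S := lam • (Qcᴴ * Ec) - Qcᴴ * Jc * Qc with hS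
      have hSs : Sᴴ = -S := by
        rw [hS, conjTranspose_sub, conjTranspose_smul, hEs, hl, conjTranspose_mul,
          conjTranspose_mul, conjTranspose_conjTranspose, hJs]
        simp [Matrix.mul_assoc]
        abel
      have hval : star (Qc *ᵥ x) ⬝ᵥ (Rc *ᵥ (Qc *ᵥ x)) = -(star x ⬝ᵥ (S *ᵥ x)) := by
        rw [mulVec_mulVec, hkey, star_mulVec, ← dotProduct_mulVec, mulVec_neg, dotProduct_neg,
          mulVec_mulVec, hS, Matrix.mul_sub, Matrix.mul_smul, Matrix.mul_assoc]
      have hreal := star_dotProduct_mulVec_self Rc (Qc *ᵥ x)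
      have hskew := star_dotProduct_mulVec_self S x
      rw [hRpos.isHermitian.eq, hval, star_neg, hskew, hSs, neg_mulVec, dotProduct_neg,
        neg_neg] at hreal
      have h0 : star x ⬝ᵥ (S *ᵥ x) = 0 := self_eq_neg.mp hreal
      rw [h0, neg_zero] at hval
      rw [← mulVec_mulVec]
      exact (hRpos.dotProduct_mulVec_zero_iff _).mp hval
    refine ⟨x, hx, ?_, hRQ⟩
    rw [hRQ] at hkey
    exact neg_eq_zero.mp hkey.symm
  · rintro ⟨x, hx, h1, h2⟩
    refine ⟨x, hx, ?_⟩
    rw [hsub, sub_sub_eq_add_sub, add_sub_right_comm, add_mulVec, h1, h2, add_zero]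
end

section
/- Let (E, (J-R)Q) be a regular DH matrix pair of real n×n matrices and let λ ∈ ℂ be purely imaginary (Re(λ) = 0). Then λ has no Jordan chain of length two for the pencil z E - (J-R)Q: there do not exist vectors x₀, x₁ ∈ ℂⁿ with x₀ ≠ 0, (λ • Eℂ - ((J-R)*Q)ℂ) x₀ = 0, and (λ • Eℂ - ((J-R)*Q)ℂ) x₁ = Eℂ x₀. In particular every purely imaginary finite eigenvalue of the pencil is semisimple. -/
open Matrix
open scoped ComplexOrder

/-!
Multiply the pencil by `Qᴴ` on the left: `M := Qᴴ (λ E - (J - R) Q) = λ QᴴE - QᴴJQ + QᴴRQ`.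
Since `λ` is purely imaginary, `QᴴE` is Hermitian and `QᴴJQ` is skew-Hermitian, we have
`M + Mᴴ = 2 S` with `S = QᴴRQ` positive semidefinite. If `M x₀ = 0`, then `x₀ᴴ S x₀ = 0`, hence
`S x₀ = 0` and `Mᴴ x₀ = 0`: the right null vector `x₀` is also a left null vector. Pairing
`M x₁ = QᴴE x₀` with `x₀` therefore gives `x₀ᴴ (QᴴE) x₀ = 0`, so `QᴴE x₀ = 0` by semidefiniteness,
and `E x₀ = 0` because `Q` is invertible. Then `(J - R) Q x₀ = 0` as well, so `x₀` lies in the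
kernel of `z E - (J - R) Q` for every `z`, which contradicts regularity.
-/

lemma posSemidef_map_complex_s6 {n : ℕ} {A : Matrix (Fin n) (Fin n) ℝ} (hA : A.PosSemidef) :
    (A.map (algebraMap ℝ ℂ)).PosSemidef := by
  -- A Gram factorization over `ℝ` remains one over `ℂ`.
  obtain ⟨B, rfl⟩ : ∃ B : Matrix (Fin n) (Fin n) ℝ, A = Bᴴ * B := by
    open scoped MatrixOrder in
    exact CStarAlgebra.nonneg_iff_eq_star_mul_self.mp hA.nonneg
  have h : (Bᴴ * B).map (algebraMap ℝ ℂ)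
      = (B.map (algebraMap ℝ ℂ))ᴴ * B.map (algebraMap ℝ ℂ) := by
    rw [Matrix.map_mul]
    congr 1
    ext i j
    simp
  rw [h]
  exact posSemidef_conjTranspose_mul_self _

/-- If the Hermitian part `S` of `M` is positive semidefinite, a right null vector of `M` is also
a left null vector, so a Jordan chain `M x₀ = 0`, `M x₁ = H x₀` with `H` positive semidefinite
forces `H x₀ = 0`. -/
lemma mulVec_eq_zero_of_chain {n : ℕ} {M S H : Matrix (Fin n) (Fin n) ℂ}
    (hS : S.PosSemidef) (hH : H.PosSemidef) (hM : M + Mᴴ = (2 : ℂ) • S)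
    {x₀ x₁ : Fin n → ℂ} (h0 : M *ᵥ x₀ = 0) (h1 : M *ᵥ x₁ = H *ᵥ x₀) :
    H *ᵥ x₀ = 0 := by
  have hleft : star x₀ ᵥ* Mᴴ = 0 := by rw [← star_mulVec, h0, star_zero]
  have hSx : S *ᵥ x₀ = 0 := by
    rw [← hS.dotProduct_mulVec_zero_iff]
    have h2 : star x₀ ⬝ᵥ ((M + Mᴴ) *ᵥ x₀) = 0 := by
      rw [add_mulVec, h0, zero_add, dotProduct_mulVec, hleft, zero_dotProduct]
    rw [hM, smul_mulVec, dotProduct_smul] at h2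
    simpa using h2
  have hMx : Mᴴ *ᵥ x₀ = 0 := by
    have h2 : (M + Mᴴ) *ᵥ x₀ = 0 := by rw [hM, smul_mulVec, hSx, smul_zero]
    rwa [add_mulVec, h0, zero_add] at h2
  rw [← hH.dotProduct_mulVec_zero_iff, ← h1, dotProduct_mulVec]
  have h3 : star x₀ ᵥ* M = 0 := by
    rw [← conjTranspose_conjTranspose M, ← star_mulVec, hMx, star_zero]
  rw [h3, zero_dotProduct]

/-- For a regular DH matrix pair, a purely imaginary number has no Jordan chain of length two
for the pencil `z E - (J-R)Q`; in particular every purely imaginary finite eigenvalue is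
semisimple. -/
theorem dh_pair_imaginary_eigenvalue_semisimple {n : ℕ}
    (E J R Q : Matrix (Fin n) (Fin n) ℝ)
    (hJ : Jᵀ = -J) (hR : R.PosSemidef) (hQ : IsUnit Q)
    (hQE : (Qᵀ * E).PosSemidef)
    (hreg : ∃ z : ℂ,
      (z • E.map (algebraMap ℝ ℂ) - ((J - R) * Q).map (algebraMap ℝ ℂ)).det ≠ 0)
    (lam : ℂ) (hlam : lam.re = 0) :
    ¬ ∃ (x₀ x₁ : Fin n → ℂ), x₀ ≠ 0 ∧
        (lam • E.map (algebraMap ℝ ℂ) - ((J - R) * Q).map (algebraMap ℝ ℂ)) *ᵥ x₀ = 0 ∧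
        (lam • E.map (algebraMap ℝ ℂ) - ((J - R) * Q).map (algebraMap ℝ ℂ)) *ᵥ x₁ =
          E.map (algebraMap ℝ ℂ) *ᵥ x₀ := by
  rintro ⟨x₀, x₁, hx, h0, h1⟩
  obtain ⟨z, hz⟩ := hreg
  have hRc := posSemidef_map_complex_s6 hR
  have hHc := posSemidef_map_complex_s6 hQE
  have hA : ((J - R) * Q).map (algebraMap ℝ ℂ)
      = (J.map (algebraMap ℝ ℂ) - R.map (algebraMap ℝ ℂ)) * Q.map (algebraMap ℝ ℂ) := by
    rw [Matrix.map_mul, Matrix.map_sub _ (map_sub _)]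
  have hQH : (Qᵀ * E).map (algebraMap ℝ ℂ)
      = (Q.map (algebraMap ℝ ℂ))ᴴ * E.map (algebraMap ℝ ℂ) := by
    rw [Matrix.map_mul]
    congr 1
    ext i j
    simp
  have hJc : (J.map (algebraMap ℝ ℂ))ᴴ = -J.map (algebraMap ℝ ℂ) := by
    ext i j
    have := congrFun (congrFun hJ i) j
    simp only [transpose_apply, Matrix.neg_apply] at this
    simp [this]
  have hQc : IsUnit (Q.map (algebraMap ℝ ℂ)) := hQ.map (algebraMap ℝ ℂ).mapMatrix
  rw [hQH] at hHc
  rw [hA] at h0 h1 hz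
  generalize E.map (algebraMap ℝ ℂ) = E' at *
  generalize J.map (algebraMap ℝ ℂ) = J' at *
  generalize R.map (algebraMap ℝ ℂ) = R' at *
  generalize Q.map (algebraMap ℝ ℂ) = Q' at *
  have hlam' : star lam = -lam := by
    apply Complex.ext <;> simp [hlam]
  have hS : (Q'ᴴ * R' * Q').PosSemidef := hRc.conjTranspose_mul_mul_same Q'
  have hHerm : E'ᴴ * Q' = Q'ᴴ * E' := by
    simpa using hHc.isHermitian.eq
  have hM : Q'ᴴ * (lam • E' - (J' - R') * Q') + (Q'ᴴ * (lam • E' - (J' - R') * Q'))ᴴ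
      = (2 : ℂ) • (Q'ᴴ * R' * Q') := by
    simp only [conjTranspose_mul, conjTranspose_sub, conjTranspose_smul,
      conjTranspose_conjTranspose, hJc, hRc.isHermitian.eq, hlam', mul_sub, sub_mul,
      mul_smul_comm, smul_mul_assoc, hHerm, two_smul, neg_smul, mul_neg, neg_mul, mul_assoc]
    abel
  have hHx : (Q'ᴴ * E') *ᵥ x₀ = 0 := by
    apply mulVec_eq_zero_of_chain hS hHc hM (x₁ := x₁)
    · rw [← mulVec_mulVec, h0, mulVec_zero]
    · rw [← mulVec_mulVec, h1, mulVec_mulVec]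
  have hEx : E' *ᵥ x₀ = 0 := by
    have hinj := mulVec_injective_iff_isUnit.mpr ((isUnit_conjTranspose Q').mpr hQc)
    apply hinj
    rw [mulVec_mulVec, hHx, mulVec_zero]
  have hAx : ((J' - R') * Q') *ᵥ x₀ = 0 := by
    simpa [sub_mulVec, smul_mulVec, hEx] using h0
  apply hz
  rw [← exists_mulVec_eq_zero_iff]
  exact ⟨x₀, hx, by rw [sub_mulVec, smul_mulVec, hEx, hAx, smul_zero, sub_zero]⟩
end

section
/- Let E, J, R, Q be real n×n matrices with Jᵀ = -J, R positive semidefinite, Q singular (not invertible), and Eᵀ * Q positive semidefinite, and assume the pair (E, (J-R)Q) is regular and that for all λ ∈ ℂ with λ ≠ 0 and all x ≠ 0 with (λ • Eℂ - ((J-R)*Q)ℂ) x = 0 one has (Qᵀ * E)ℂ x ≠ 0. Then for purely imaginary λ (Re(λ) = 0), λ is a finite eigenvalue of the pencil z E - (J-R)Q if and only if there exists a nonzero x ∈ ℂⁿ with (λ • Eℂ - (J*Q)ℂ) x = 0 and (R*Q)ℂ x = 0. -/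
/-!
If `lam • E x = (J - R) Q x`, pair this equation with `Q x`: writing `q M = xᴴ M x`,
`lam * q (Qᵀ E) = q (Qᵀ J Q) - q (Qᵀ R Q)`. Since `Qᵀ E` is symmetric, `Qᵀ J Q` is skew and `lam`
is imaginary, `q (Qᵀ R Q)` is purely imaginary. Factoring `R = Sᵀ S`, it is also the square norm of
`S Q x`, so `S Q x = 0`, hence `R Q x = 0` and `x` itself is an eigenvector of `z E - J Q`.
The converse holds because `(J - R) Q x = J Q x` as soon as `R Q x = 0`.
-/

open Matrix

/-- For a real matrix `M`, conjugating the form `xᴴ M x` amounts to transposing `M`. -/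
lemma star_form_map {n : ℕ} (M : Matrix (Fin n) (Fin n) ℝ) (x : Fin n → ℂ) :
    star (star x ⬝ᵥ M.map (algebraMap ℝ ℂ) *ᵥ x) =
      star x ⬝ᵥ Mᵀ.map (algebraMap ℝ ℂ) *ᵥ x := by
  have h : (M.map (algebraMap ℝ ℂ))ᴴ = Mᵀ.map (algebraMap ℝ ℂ) := by
    ext i j
    simp
  rw [← h, ← star_dotProduct, star_mulVec, ← dotProduct_mulVec]

/-- Singular `Q` variant: under the extra eigenvector condition, a purely imaginary `lam` is a
finite eigenvalue of the pencil `z E - (J-R)Q` if and only if `R Q x = 0` for some eigenvector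
`x` of the pencil `z E - J Q` associated with `lam`. -/
theorem dh_pair_singular_Q_imaginary_eigenvalue_iff {n : ℕ}
    (E J R Q : Matrix (Fin n) (Fin n) ℝ)
    (hJ : Jᵀ = -J) (hR : R.PosSemidef) (hQ : ¬ IsUnit Q)
    (hEQ : (Eᵀ * Q).PosSemidef)
    (hreg : ∃ z : ℂ,
      (z • E.map (algebraMap ℝ ℂ) - ((J - R) * Q).map (algebraMap ℝ ℂ)).det ≠ 0)
    (hvec : ∀ (z : ℂ) (x : Fin n → ℂ), z ≠ 0 → x ≠ 0 →
      (z • E.map (algebraMap ℝ ℂ) - ((J - R) * Q).map (algebraMap ℝ ℂ)) *ᵥ x = 0 →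
      (Qᵀ * E).map (algebraMap ℝ ℂ) *ᵥ x ≠ 0)
    (lam : ℂ) (hlam : lam.re = 0) :
    (∃ x : Fin n → ℂ, x ≠ 0 ∧
        (lam • E.map (algebraMap ℝ ℂ) - ((J - R) * Q).map (algebraMap ℝ ℂ)) *ᵥ x = 0) ↔
      ∃ x : Fin n → ℂ, x ≠ 0 ∧
        (lam • E.map (algebraMap ℝ ℂ) - (J * Q).map (algebraMap ℝ ℂ)) *ᵥ x = 0 ∧
        (R * Q).map (algebraMap ℝ ℂ) *ᵥ x = 0 := by
  have hdecomp : (J - R) * Q = J * Q - R * Q := sub_mul _ _ _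
  have hmap : ((J - R) * Q).map (algebraMap ℝ ℂ) =
      (J * Q).map (algebraMap ℝ ℂ) - (R * Q).map (algebraMap ℝ ℂ) := by
    rw [hdecomp]
    ext i j
    simp
  constructor
  · rintro ⟨x, hx, h⟩
    have hRQ : (R * Q).map (algebraMap ℝ ℂ) *ᵥ x = 0 := by
      obtain ⟨S, hS⟩ : ∃ S : Matrix (Fin n) (Fin n) ℝ, R = Sᵀ * S := by
        obtain ⟨S, hS⟩ : ∃ S, R = star S * S := by
          open scoped MatrixOrder in
          exact CStarAlgebra.nonneg_iff_eq_star_mul_self.1 hR.nonneg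
        exact ⟨S, by rw [hS, star_eq_conjTranspose, conjTranspose_eq_transpose_of_trivial]⟩
      have hET : (Qᵀ * E)ᵀ = Qᵀ * E := by
        have h1 := hEQ.isHermitian.eq
        rw [conjTranspose_eq_transpose_of_trivial, transpose_mul, transpose_transpose] at h1
        rw [transpose_mul, transpose_transpose, h1]
      have hJT : (Qᵀ * (J * Q))ᵀ = -(Qᵀ * (J * Q)) := by
        simp [transpose_mul, hJ, Matrix.mul_assoc]
      have eE := star_form_map (Qᵀ * E) x
      have eJ := star_form_map (Qᵀ * (J * Q)) x
      have eR := star_form_map (Qᵀ * (R * Q)) x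
      have hRT : (Qᵀ * (R * Q))ᵀ = Qᵀ * (R * Q) := by
        simp [hS, transpose_mul, Matrix.mul_assoc]
      have hneg : (-(Qᵀ * (J * Q))).map (algebraMap ℝ ℂ) =
          -((Qᵀ * (J * Q)).map (algebraMap ℝ ℂ)) := by
        ext i j
        simp
      rw [hET] at eE
      rw [hJT, hneg, neg_mulVec, dotProduct_neg] at eJ
      rw [hRT] at eR
      have key : lam * (star x ⬝ᵥ (Qᵀ * E).map (algebraMap ℝ ℂ) *ᵥ x) =
          star x ⬝ᵥ (Qᵀ * (J * Q)).map (algebraMap ℝ ℂ) *ᵥ x -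
          star x ⬝ᵥ (Qᵀ * (R * Q)).map (algebraMap ℝ ℂ) *ᵥ x := by
        have h2 := congrArg (fun v => star x ⬝ᵥ Qᵀ.map (algebraMap ℝ ℂ) *ᵥ v) h
        simp only [hmap, sub_mulVec, smul_mulVec, mulVec_sub, mulVec_smul, dotProduct_sub,
          dotProduct_smul, mulVec_zero, dotProduct_zero, mulVec_mulVec, ← Matrix.map_mul,
          smul_eq_mul] at h2
        linear_combination h2
      have hl : star lam = -lam := by
        apply Complex.ext <;> simp [hlam]
      have key' := congrArg star key
      rw [star_mul', star_sub, eE, eJ, eR, hl] at key'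
      have hzero : star x ⬝ᵥ (Qᵀ * (R * Q)).map (algebraMap ℝ ℂ) *ᵥ x = 0 := by
        linear_combination (1 / 2 : ℂ) * key + (1 / 2 : ℂ) * key'
      have hSQ : (S * Q).map (algebraMap ℝ ℂ) *ᵥ x = 0 := by
        have hfac : Qᵀ * (R * Q) = (S * Q)ᵀ * (S * Q) := by
          simp [hS, transpose_mul, Matrix.mul_assoc]
        have hct : (S * Q)ᵀ.map (algebraMap ℝ ℂ) = ((S * Q).map (algebraMap ℝ ℂ))ᴴ := by
          ext i j
          simp [-transpose_mul]
        rw [hfac, Matrix.map_mul, hct, ← mulVec_mulVec, dotProduct_mulVec, ← star_mulVec] at hzero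
        open scoped ComplexOrder in
        exact dotProduct_star_self_eq_zero.1 hzero
      rw [hS, Matrix.mul_assoc, Matrix.map_mul, ← mulVec_mulVec, hSQ, mulVec_zero]
    refine ⟨x, hx, ?_, hRQ⟩
    rwa [hmap, sub_mulVec, sub_mulVec, hRQ, sub_zero, ← sub_mulVec] at h
  · rintro ⟨x, hx, h, hRQ⟩
    refine ⟨x, hx, ?_⟩
    rwa [hmap, sub_mulVec, sub_mulVec, hRQ, sub_zero, ← sub_mulVec]
end

section
/- Let E, J, R, Q be real n×n matrices with Jᵀ = -J, R positive semidefinite, Q singular (not invertible), and Eᵀ * Q positive semidefinite, and assume the pair (E, (J-R)Q) is regular and that for all λ ∈ ℂ with λ ≠ 0 and all x ≠ 0 with (λ • Eℂ - ((J-R)*Q)ℂ) x = 0 one has (Qᵀ * E)ℂ x ≠ 0. Then every nonzero purely imaginary finite eigenvalue λ (Re(λ) = 0, λ ≠ 0) of the pencil z E - (J-R)Q is semisimple: there do not exist x₀, x₁ ∈ ℂⁿ with x₀ ≠ 0, (λ • Eℂ - ((J-R)*Q)ℂ) x₀ = 0, and (λ • Eℂ - ((J-R)*Q)ℂ) x₁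 = Eℂ x₀. -/
/-!
Write `S = Eᴴ Q`, which is positive semidefinite, hence also equal to `Qᴴ E`. For an eigenvector
`x₀` at an imaginary `λ`, put `y = Q x₀`. The real part of `y* (λ E - (J - R) Q) x₀ = 0` is
`y* R y = 0`, since `λ x₀* S x₀` and `y* J y` are imaginary; so `R y = 0` and `λ E x₀ = J y`.
Taking adjoints, `y* (J - R) = λ x₀* Eᴴ`, so `y*` annihilates the range of `λ E - (J - R) Q`.
If `E x₀` lies in that range, then `x₀* S x₀ = y* E x₀ = 0`, so `S x₀ = Qᴴ E x₀ = 0`,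
which the eigenvector condition excludes. The argument is carried out for complex matrices in
`mulVec_eq_zero_of_jordan_chain`.
-/

open Matrix

open scoped ComplexOrder

/-- For complex dissipative Hamiltonian pencils, the first vector of a Jordan chain of length two
at an imaginary eigenvalue is annihilated by `Qᴴ * E`. -/
lemma mulVec_eq_zero_of_jordan_chain {n : ℕ} {E J R Q : Matrix (Fin n) (Fin n) ℂ}
    (hJ : Jᴴ = -J) (hR : R.PosSemidef) (hS : (Eᴴ * Q).PosSemidef)
    {lam : ℂ} (hlam : lam.re = 0) {x₀ x₁ : Fin n → ℂ}
    (h₀ : (lam • E - (J - R) * Q) *ᵥ x₀ = 0)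
    (h₁ : (lam • E - (J - R) * Q) *ᵥ x₁ = E *ᵥ x₀) :
    (Qᴴ * E) *ᵥ x₀ = 0 := by
  have hSe : Qᴴ * E = Eᴴ * Q := by
    have := hS.isHermitian.eq
    rwa [conjTranspose_mul, conjTranspose_conjTranspose] at this
  have hstar : star lam = -lam := by
    apply Complex.ext <;> simp [hlam]
  set y := Q *ᵥ x₀ with hy
  have h₀' : lam • (E *ᵥ x₀) - J *ᵥ y + R *ᵥ y = 0 := by
    rw [← h₀, hy, sub_mulVec, smul_mulVec, ← mulVec_mulVec, sub_mulVec]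
    abel
  -- moves `Q` across the pairing with `y`
  have hyE : ∀ v, star y ⬝ᵥ (E *ᵥ v) = star x₀ ⬝ᵥ ((Eᴴ * Q) *ᵥ v) := by
    intro v
    rw [hy, star_mulVec, ← dotProduct_mulVec, mulVec_mulVec, hSe]
  have hRy : R *ᵥ y = 0 := by
    have hpair := congrArg (fun v => star y ⬝ᵥ v) h₀'
    simp only [dotProduct_add, dotProduct_sub, dotProduct_smul, dotProduct_zero, hyE,
      smul_eq_mul] at hpair
    have hJre : (star y ⬝ᵥ (J *ᵥ y)).re = 0 := by
      have h : star (star y ⬝ᵥ (J *ᵥ y)) = -(star y ⬝ᵥ (J *ᵥ y)) := by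
        rw [← star_dotProduct, star_mulVec, hJ, ← dotProduct_mulVec, neg_mulVec,
          dotProduct_neg]
      have h2 := congrArg Complex.re h
      simp at h2
      linarith
    have hSnn := Complex.nonneg_iff.mp (hS.dotProduct_mulVec_nonneg x₀)
    have hRnn := Complex.nonneg_iff.mp (hR.dotProduct_mulVec_nonneg y)
    have hre := congrArg Complex.re hpair
    simp only [Complex.add_re, Complex.sub_re, Complex.mul_re, hlam, hJre, ← hSnn.2,
      Complex.zero_re] at hre
    refine (hR.dotProduct_mulVec_zero_iff y).mp (Complex.ext ?_ hRnn.2.symm)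
    simpa using hre
  have hJy : J *ᵥ y = lam • (E *ᵥ x₀) := by
    rw [hRy, add_zero, sub_eq_zero] at h₀'
    exact h₀'.symm
  have hyR : ∀ v, star y ⬝ᵥ (R *ᵥ v) = 0 := by
    intro v
    have h := star_mulVec R y
    rw [hRy, hR.isHermitian.eq, star_zero] at h
    rw [dotProduct_mulVec, ← h, zero_dotProduct]
  have hyJ : ∀ v, star y ⬝ᵥ (J *ᵥ v) = lam * (star x₀ ⬝ᵥ (Eᴴ *ᵥ v)) := by
    intro v
    have h := star_mulVec J y
    rw [hJy, hJ, vecMul_neg, star_smul, star_mulVec, hstar, neg_smul, neg_inj] at h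
    rw [dotProduct_mulVec, ← h, smul_dotProduct, smul_eq_mul, dotProduct_mulVec]
  have hzero : star x₀ ⬝ᵥ ((Eᴴ * Q) *ᵥ x₀) = 0 := by
    rw [← hyE, ← h₁, sub_mulVec, smul_mulVec, ← mulVec_mulVec, sub_mulVec, dotProduct_sub,
      dotProduct_sub, hyR, hyJ, dotProduct_smul, hyE, mulVec_mulVec, smul_eq_mul]
    ring
  rw [hSe]
  exact (hS.dotProduct_mulVec_zero_iff x₀).mp hzero

/-- Singular `Q` variant: under the extra eigenvector condition, every nonzero purely imaginary
finite eigenvalue of the pencil `z E - (J-R)Q` is semisimple (no Jordan chain of length two). -/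
theorem dh_pair_singular_Q_imaginary_eigenvalue_semisimple {n : ℕ}
    (E J R Q : Matrix (Fin n) (Fin n) ℝ)
    (hJ : Jᵀ = -J) (hR : R.PosSemidef) (hQ : ¬ IsUnit Q)
    (hEQ : (Eᵀ * Q).PosSemidef)
    (hreg : ∃ z : ℂ,
      (z • E.map (algebraMap ℝ ℂ) - ((J - R) * Q).map (algebraMap ℝ ℂ)).det ≠ 0)
    (hvec : ∀ (z : ℂ) (x : Fin n → ℂ), z ≠ 0 → x ≠ 0 →
      (z • E.map (algebraMap ℝ ℂ) - ((J - R) * Q).map (algebraMap ℝ ℂ)) *ᵥ x = 0 →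
      (Qᵀ * E).map (algebraMap ℝ ℂ) *ᵥ x ≠ 0)
    (lam : ℂ) (hlam : lam.re = 0) (hlam0 : lam ≠ 0) :
    ¬ ∃ (x₀ x₁ : Fin n → ℂ), x₀ ≠ 0 ∧
        (lam • E.map (algebraMap ℝ ℂ) - ((J - R) * Q).map (algebraMap ℝ ℂ)) *ᵥ x₀ = 0 ∧
        (lam • E.map (algebraMap ℝ ℂ) - ((J - R) * Q).map (algebraMap ℝ ℂ)) *ᵥ x₁ =
          E.map (algebraMap ℝ ℂ) *ᵥ x₀ := by
  rintro ⟨x₀, x₁, hx₀, h₀, h₁⟩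
  have hH : ∀ M : Matrix (Fin n) (Fin n) ℝ,
      (M.map (algebraMap ℝ ℂ))ᴴ = Mᵀ.map (algebraMap ℝ ℂ) := by
    intro M
    ext i j
    simp
  have hM : ((J - R) * Q).map (algebraMap ℝ ℂ)
      = (J.map (algebraMap ℝ ℂ) - R.map (algebraMap ℝ ℂ)) * Q.map (algebraMap ℝ ℂ) := by
    rw [Matrix.map_mul, Matrix.map_sub _ (map_sub _)]
  refine hvec lam x₀ hlam0 hx₀ h₀ ?_
  rw [hM] at h₀ h₁
  rw [Matrix.map_mul, ← hH]
  refine mulVec_eq_zero_of_jordan_chain ?_ (posSemidef_map_complex hR) ?_ hlam h₀ h₁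
  · rw [hH, hJ]
    ext i j
    simp
  · rw [hH, ← Matrix.map_mul]
    exact posSemidef_map_complex hEQ
end

section
/- Let (E, (J-R)Q) be a DH matrix pair of real n×n matrices whose dissipation matrix R is positive definite. Then every finite eigenvalue of the pencil z E - (J-R)Q lies in the open left half of the complex plane: if λ ∈ ℂ and x ∈ ℂⁿ, x ≠ 0, satisfy (λ • Eℂ - ((J-R)*Q)ℂ) x = 0, then Re(λ) < 0. -/
open Matrix

/-!
Put `y = Q x`. Pairing the eigenvalue equation `lam E x = (J - R) Q x` with `y` gives
`lam (x* Qᵀ E x) = y* J y - y* R y`. The scalar `x* Qᵀ E x` is real and nonnegative, `y* J y` is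
purely imaginary, and `y* R y > 0` since `y ≠ 0`; comparing real parts yields
`lam.re * (x* Qᵀ E x) < 0`, hence `lam.re < 0`.

The computation is carried out over `ℝ`, with `x = u + i v`: the real part of the pairing is the
sum of the pairing of the real part of the equation with `Q u` and of its imaginary part with `Q v`.
-/

lemma re_map_mulVec {n : ℕ} (M : Matrix (Fin n) (Fin n) ℝ) (x : Fin n → ℂ) (i : Fin n) :
    ((M.map (algebraMap ℝ ℂ) *ᵥ x) i).re = (M *ᵥ fun j => (x j).re) i := by
  simp [mulVec, dotProduct]

lemma im_map_mulVec {n : ℕ} (M : Matrix (Fin n) (Fin n) ℝ) (x : Fin n → ℂ) (i : Fin n) :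
    ((M.map (algebraMap ℝ ℂ) *ᵥ x) i).im = (M *ᵥ fun j => (x j).im) i := by
  simp [mulVec, dotProduct]

lemma dotProduct_skew_mulVec_self {n : ℕ} {J : Matrix (Fin n) (Fin n) ℝ} (hJ : Jᵀ = -J)
    (w : Fin n → ℝ) : w ⬝ᵥ (J *ᵥ w) = 0 := by
  have h : w ⬝ᵥ (J *ᵥ w) = w ⬝ᵥ (Jᵀ *ᵥ w) := by
    rw [mulVec_transpose, dotProduct_mulVec, dotProduct_comm]
  rw [hJ, neg_mulVec, dotProduct_neg] at h
  linarith

/-- For a DH matrix pair with positive definite dissipation matrix, every finite eigenvalue of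
the pencil `z E - (J-R)Q` lies in the open left half of the complex plane. -/
theorem dh_pair_posdef_dissipation_eigenvalues_open_left_halfplane {n : ℕ}
    (E J R Q : Matrix (Fin n) (Fin n) ℝ)
    (hJ : Jᵀ = -J) (hR : R.PosDef) (hQ : IsUnit Q)
    (hQE : (Qᵀ * E).PosSemidef) :
    ∀ (lam : ℂ) (x : Fin n → ℂ), x ≠ 0 →
      (lam • E.map (algebraMap ℝ ℂ) - ((J - R) * Q).map (algebraMap ℝ ℂ)) *ᵥ x = 0 →
      lam.re < 0 := by
  intro lam x hx h
  set u : Fin n → ℝ := fun j => (x j).re with hu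
  set v : Fin n → ℝ := fun j => (x j).im with hv
  rw [sub_mulVec, smul_mulVec, sub_eq_zero] at h
  have hre : lam.re • (E *ᵥ u) - lam.im • (E *ᵥ v) = (J - R) *ᵥ (Q *ᵥ u) := by
    ext i
    have := congrArg Complex.re (congrFun h i)
    rw [re_map_mulVec, Pi.smul_apply, smul_eq_mul, Complex.mul_re, re_map_mulVec,
      im_map_mulVec] at this
    simpa [mulVec_mulVec] using this
  have him : lam.re • (E *ᵥ v) + lam.im • (E *ᵥ u) = (J - R) *ᵥ (Q *ᵥ v) := by
    ext i
    have := congrArg Complex.im (congrFun h i)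
    rw [im_map_mulVec, Pi.smul_apply, smul_eq_mul, Complex.mul_im, re_map_mulVec,
      im_map_mulVec] at this
    simpa [mulVec_mulVec] using this
  have hform : ∀ a b : Fin n → ℝ, (Q *ᵥ a) ⬝ᵥ (E *ᵥ b) = a ⬝ᵥ ((Qᵀ * E) *ᵥ b) := by
    intro a b
    rw [← mulVec_mulVec, dotProduct_mulVec a, vecMul_transpose]
  have hsymm : v ⬝ᵥ ((Qᵀ * E) *ᵥ u) = u ⬝ᵥ ((Qᵀ * E) *ᵥ v) := by
    have hT : (Qᵀ * E)ᵀ = Qᵀ * E := by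
      simpa [conjTranspose_eq_transpose_of_trivial] using hQE.isHermitian.eq
    rw [dotProduct_mulVec, ← mulVec_transpose, hT, dotProduct_comm]
  have hEu : 0 ≤ u ⬝ᵥ ((Qᵀ * E) *ᵥ u) := by simpa using hQE.dotProduct_mulVec_nonneg u
  have hEv : 0 ≤ v ⬝ᵥ ((Qᵀ * E) *ᵥ v) := by simpa using hQE.dotProduct_mulVec_nonneg v
  have hR0 : ∀ w, 0 ≤ w ⬝ᵥ (R *ᵥ w) := fun w => by
    simpa using hR.posSemidef.dotProduct_mulVec_nonneg w
  have hRpos : ∀ w, w ≠ 0 → 0 < (Q *ᵥ w) ⬝ᵥ (R *ᵥ (Q *ᵥ w)) := fun w hw => by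
    have hQw : Q *ᵥ w ≠ 0 := fun h0 =>
      hw (mulVec_injective_of_isUnit hQ (by rw [h0, mulVec_zero]))
    simpa using hR.dotProduct_mulVec_pos hQw
  have hsum : 0 < (Q *ᵥ u) ⬝ᵥ (R *ᵥ (Q *ᵥ u)) + (Q *ᵥ v) ⬝ᵥ (R *ᵥ (Q *ᵥ v)) := by
    by_cases hu0 : u = 0
    · have hv0 : v ≠ 0 := fun hv0 =>
        hx (funext fun i => Complex.ext (congrFun hu0 i) (congrFun hv0 i))
      exact add_pos_of_nonneg_of_pos (hR0 _) (hRpos v hv0)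
    · exact add_pos_of_pos_of_nonneg (hRpos u hu0) (hR0 _)
  have h1 := congrArg (fun w => (Q *ᵥ u) ⬝ᵥ w) hre
  have h2 := congrArg (fun w => (Q *ᵥ v) ⬝ᵥ w) him
  simp only [dotProduct_sub, dotProduct_add, dotProduct_smul, sub_mulVec, hform,
    dotProduct_skew_mulVec_self hJ, smul_eq_mul, hsymm] at h1 h2
  by_contra! hlam
  -- The `lam.im` terms of `h1` and `h2` cancel in the sum, by symmetry of `Qᵀ * E`.
  nlinarith [mul_nonneg hlam hEu, mul_nonneg hlam hEv]
end

section
/- Let E, J, R, Q be real n×n matrices with Jᵀ = -J, R positive definite, Q invertible, and Qᵀ * E positive semidefinite. If x ∈ ℂⁿ satisfies xᴴ Eℂ = 0 (i.e., star x ⬝ᵥ (Eℂ *ᵥ e_i) = 0 for the vector-matrix product on the left) and xᴴ ((J-R)*Q)ℂ u = 0 for every u ∈ ℂⁿ with Eℂ u = 0, then x = 0. (This expresses that rank [E, (J-R)Q U] = n for U a matrix whose columns span the nullspace of E, i.e., the pencil z E - (J-R)Q has index at most one.) -/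
/-!
Symmetry of `Qᵀ E` gives `E Q⁻¹ = Q⁻ᵀ Eᵀ`, so `xᴴ E = 0`, i.e. `Eᵀ x = 0`, implies that
`u = Q⁻¹ x` lies in the nullspace of `E`. Testing the second hypothesis with this `u` yields
`xᴴ (J - R) x = 0`. The skew-symmetric `J` contributes nothing to the real part, so writing
`x = a + i b` one gets `aᵀ R a + bᵀ R b = 0`, and positive definiteness of `R` forces `a = b = 0`.
-/

open Matrix

lemma re_star_dotProduct_map_mulVec {n : ℕ} (M : Matrix (Fin n) (Fin n) ℝ) (x : Fin n → ℂ) :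
    (star x ⬝ᵥ (M.map (algebraMap ℝ ℂ) *ᵥ x)).re =
      (fun i => (x i).re) ⬝ᵥ (M *ᵥ fun i => (x i).re) +
      (fun i => (x i).im) ⬝ᵥ (M *ᵥ fun i => (x i).im) := by
  simp [dotProduct, mulVec, Complex.re_sum, Complex.im_sum, Finset.sum_add_distrib]

lemma dotProduct_mulVec_self_of_skew {n : ℕ} {J : Matrix (Fin n) (Fin n) ℝ} (hJ : Jᵀ = -J)
    (a : Fin n → ℝ) : a ⬝ᵥ (J *ᵥ a) = 0 := by
  have h : a ⬝ᵥ (J *ᵥ a) = a ⬝ᵥ (Jᵀ *ᵥ a) := by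
    rw [mulVec_transpose, dotProduct_mulVec, dotProduct_comm]
  rw [hJ, neg_mulVec, dotProduct_neg] at h
  linarith

/-- For a DH pair with positive definite dissipation, the pencil `z E - (J-R)Q` has index at
most one: if `xᴴ E = 0` and `xᴴ (J-R)Q u = 0` for every `u` in the nullspace of `E`, then
`x = 0`. -/
theorem dh_pair_posdef_dissipation_index_at_most_one {n : ℕ}
    (E J R Q : Matrix (Fin n) (Fin n) ℝ)
    (hJ : Jᵀ = -J) (hR : R.PosDef) (hQ : IsUnit Q)
    (hQE : (Qᵀ * E).PosSemidef)
    (x : Fin n → ℂ)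
    (hxE : Matrix.vecMul (star x) (E.map (algebraMap ℝ ℂ)) = 0)
    (hxA : ∀ u : Fin n → ℂ, E.map (algebraMap ℝ ℂ) *ᵥ u = 0 →
      star x ⬝ᵥ (((J - R) * Q).map (algebraMap ℝ ℂ) *ᵥ u) = 0) :
    x = 0 := by
  have hdet : IsUnit Q.det := (Matrix.isUnit_iff_isUnit_det Q).1 hQ
  have hdetT : IsUnit Qᵀ.det := by rwa [det_transpose]
  have hsymm : Eᵀ * Q = Qᵀ * E := by
    have h := hQE.1.eq
    rwa [conjTranspose_eq_transpose_of_trivial, transpose_mul, transpose_transpose] at h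
  have hEQ : E * Q⁻¹ = Qᵀ⁻¹ * Eᵀ := by
    calc E * Q⁻¹ = Qᵀ⁻¹ * (Qᵀ * E) * Q⁻¹ := by rw [nonsing_inv_mul_cancel_left _ _ hdetT]
      _ = Qᵀ⁻¹ * Eᵀ := by
        rw [← hsymm, Matrix.mul_assoc, mul_nonsing_inv_cancel_right _ _ hdet]
  have hETx : Eᵀ.map (algebraMap ℝ ℂ) *ᵥ x = 0 := by
    have hE : (E.map (algebraMap ℝ ℂ))ᴴ = Eᵀ.map (algebraMap ℝ ℂ) := by
      ext i j; simp
    have h := congrArg star hxE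
    rwa [star_vecMul, star_star, star_zero, hE] at h
  have hu : E.map (algebraMap ℝ ℂ) *ᵥ (Q⁻¹.map (algebraMap ℝ ℂ) *ᵥ x) = 0 := by
    rw [mulVec_mulVec, ← Matrix.map_mul, hEQ, Matrix.map_mul, ← mulVec_mulVec, hETx, mulVec_zero]
  have hx := hxA _ hu
  rw [mulVec_mulVec, ← Matrix.map_mul, mul_nonsing_inv_cancel_right _ _ hdet] at hx
  have hre := congrArg Complex.re hx
  rw [re_star_dotProduct_map_mulVec] at hre
  simp only [sub_mulVec, dotProduct_sub, dotProduct_mulVec_self_of_skew hJ, Complex.zero_re] at hre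
  have hnn : ∀ a : Fin n → ℝ, 0 ≤ a ⬝ᵥ (R *ᵥ a) := fun a => by
    simpa using hR.posSemidef.dotProduct_mulVec_nonneg a
  have hz : ∀ a : Fin n → ℝ, a ⬝ᵥ (R *ᵥ a) = 0 → a = 0 := fun a ha => by
    by_contra hne
    have h := hR.dotProduct_mulVec_pos hne
    simp [ha] at h
  have ha := hz (fun i => (x i).re) (by
    linarith [hnn fun i => (x i).re, hnn fun i => (x i).im])
  have hb := hz (fun i => (x i).im) (by
    linarith [hnn fun i => (x i).re, hnn fun i => (x i).im])
  ext i
  exact Complex.ext (congrFun ha i) (congrFun hb i)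
end

section
/- Let E, A be real n×n matrices and suppose there exists an invertible real n×n matrix V with Vᵀ * A + Aᵀ * V negative definite and Eᵀ * V = Vᵀ * E positive semidefinite. Then setting Q = V, J = ((A * V⁻¹) - (A * V⁻¹)ᵀ)/2, and R = -((A * V⁻¹) + (A * V⁻¹)ᵀ)/2, one has A = (J - R) * Q, Jᵀ = -J, R is positive definite, Q is invertible, and Qᵀ * E is positive semidefinite; i.e., (E, A) is a DH matrix pair with positive definite dissipation matrix. -/
/-!
With `M = A V⁻¹`, so that `A = M V`, the matrices `J` and `-R` are the skew-symmetric and symmetric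
parts of `M`; hence `J - R = M`. Positive definiteness of `R` is invariant under congruence by the
invertible matrix `V`, and `Vᵀ R V = -(Vᵀ A + Aᵀ V) / 2` is positive definite by assumption.
-/

open Matrix

/-- From a generalized Lyapunov solution `V` one builds a DH representation of `(E, A)` with
positive definite dissipation matrix. -/
theorem lyapunov_gives_dh_pair {n : ℕ}
    (E A V : Matrix (Fin n) (Fin n) ℝ)
    (hV : IsUnit V)
    (hlyap : (-(Vᵀ * A + Aᵀ * V)).PosDef)
    (hEV : Eᵀ * V = Vᵀ * E)
    (hEVpsd : (Vᵀ * E).PosSemidef) :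
    A = (((1 : ℝ) / 2) • (A * V⁻¹ - (A * V⁻¹)ᵀ) -
          (-(((1 : ℝ) / 2) • (A * V⁻¹ + (A * V⁻¹)ᵀ)))) * V ∧
      (((1 : ℝ) / 2) • (A * V⁻¹ - (A * V⁻¹)ᵀ))ᵀ =
        -(((1 : ℝ) / 2) • (A * V⁻¹ - (A * V⁻¹)ᵀ)) ∧
      (-(((1 : ℝ) / 2) • (A * V⁻¹ + (A * V⁻¹)ᵀ))).PosDef ∧
      IsUnit V ∧ (Vᵀ * E).PosSemidef := by
  have hMV : A * V⁻¹ * V = A :=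
    Matrix.nonsing_inv_mul_cancel_right V A ((Matrix.isUnit_iff_isUnit_det V).mp hV)
  generalize A * V⁻¹ = M at hMV ⊢
  subst hMV
  refine ⟨?_, ?_, ?_, hV, hEVpsd⟩
  · congr 1
    module
  · rw [transpose_smul, transpose_sub, transpose_transpose]
    module
  · -- Congruence by the invertible `V` turns `R` into half of `-(Vᵀ A + Aᵀ V)`.
    rw [← Matrix.IsUnit.posDef_star_left_conjugate_iff hV]
    have key : star V * (-(((1 : ℝ) / 2) • (M + Mᵀ))) * V =
        ((1 : ℝ) / 2) • (-(Vᵀ * (M * V) + (M * V)ᵀ * V)) := by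
      rw [star_eq_conjTranspose, conjTranspose_eq_transpose_of_trivial, transpose_mul]
      simp only [mul_neg, neg_mul, smul_neg, Matrix.mul_smul, Matrix.smul_mul, mul_add, add_mul,
        mul_assoc]
    rw [key]
    exact hlyap.smul (by norm_num)
end

section
/- Let E, A be real n×n matrices. Then there exist real n×n matrices J, R, Q with A = (J - R) * Q, Jᵀ = -J, R positive definite, Q invertible, and Qᵀ * E positive semidefinite, if and only if there exists an invertible real n×n matrix V with Vᵀ * A + Aᵀ * V negative definite and Eᵀ * V = Vᵀ * E positive semidefinite. (Combining the paper's characterization of asymptotically stable, regular, index at most one pairs as DH pairs with positive definite dissipation and the generalized Lyapunov characterization.) -/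
/-!
The two conditions are linked by taking `V = Q`. If `A = (J - R) * Q` with `J` skew-symmetric and
`R` symmetric, then `Qᵀ * A + Aᵀ * Q = -2 • Qᵀ * R * Q`, a negative definite congruence of `R`.
Conversely, `J` and `-R` are the skew-symmetric and symmetric parts of `A * V⁻¹`, and
`R = (1 / 2) • V⁻ᵀ * (-(Vᵀ * A + Aᵀ * V)) * V⁻¹` is again a congruence.
-/

open Matrix

/-- `(E, A)` is a DH matrix pair with positive definite dissipation matrix if and only if there
exists an invertible `V` with `Vᵀ A + Aᵀ V` negative definite and `Eᵀ V = Vᵀ E ⪰ 0`. -/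
theorem dh_pair_posdef_iff_lyapunov {n : ℕ}
    (E A : Matrix (Fin n) (Fin n) ℝ) :
    (∃ J R Q : Matrix (Fin n) (Fin n) ℝ, A = (J - R) * Q ∧ Jᵀ = -J ∧ R.PosDef ∧
        IsUnit Q ∧ (Qᵀ * E).PosSemidef) ↔
      ∃ V : Matrix (Fin n) (Fin n) ℝ, IsUnit V ∧ (-(Vᵀ * A + Aᵀ * V)).PosDef ∧
        Eᵀ * V = Vᵀ * E ∧ (Vᵀ * E).PosSemidef := by
  constructor
  · rintro ⟨J, R, Q, rfl, hJ, hR, hQ, hE⟩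
    refine ⟨Q, hQ, ?_, ?_, hE⟩
    · have hRt : Rᵀ = R := by simpa using hR.isHermitian.eq
      have h := (hR.conjTranspose_mul_mul_same (mulVec_injective_of_isUnit hQ)).smul
        (show (0 : ℝ) < 2 by norm_num)
      rw [conjTranspose_eq_transpose_of_trivial] at h
      convert h using 1
      rw [transpose_mul, transpose_sub, hJ, hRt, two_smul]
      noncomm_ring
    · simpa using hE.isHermitian.eq
  · rintro ⟨V, hV, hD, -, hP⟩
    have hVi : IsUnit V⁻¹ := (isUnit_nonsing_inv_iff).2 hV
    have hd : IsUnit V.det := (isUnit_iff_isUnit_det V).1 hV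
    have h1 : V⁻¹ᵀ * Vᵀ = 1 := by rw [← transpose_mul, mul_nonsing_inv V hd, transpose_one]
    have h2 : V * V⁻¹ = 1 := mul_nonsing_inv V hd
    refine ⟨(1 / 2 : ℝ) • (A * V⁻¹ - (A * V⁻¹)ᵀ), -((1 / 2 : ℝ) • (A * V⁻¹ + (A * V⁻¹)ᵀ)), V,
      ?_, ?_, ?_, hV, hP⟩
    · have h : (1 / 2 : ℝ) • (A * V⁻¹ - (A * V⁻¹)ᵀ) - -((1 / 2 : ℝ) • (A * V⁻¹ + (A * V⁻¹)ᵀ))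
          = A * V⁻¹ := by module
      rw [h, nonsing_inv_mul_cancel_right _ _ hd]
    · rw [transpose_smul, transpose_sub, transpose_transpose]
      module
    · have h := (hD.conjTranspose_mul_mul_same (mulVec_injective_of_isUnit hVi)).smul
        (show (0 : ℝ) < 1 / 2 by norm_num)
      rw [conjTranspose_eq_transpose_of_trivial] at h
      convert h using 1
      have h3 : V⁻¹ᵀ * (-(Vᵀ * A + Aᵀ * V)) * V⁻¹ = -(A * V⁻¹ + (A * V⁻¹)ᵀ) := by
        calc _ = -((V⁻¹ᵀ * Vᵀ) * (A * V⁻¹) + V⁻¹ᵀ * Aᵀ * (V * V⁻¹)) := by noncomm_ring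
          _ = _ := by rw [h1, h2, transpose_mul, one_mul, mul_one]
      rw [h3, smul_neg]
end

section
/- Let E, A be real n×n matrices. Then the infimum over all (M, J, R, Q) with Jᵀ = -J, R positive definite, Q invertible, and Qᵀ * M positive semidefinite of ‖E - M‖_F² + ‖A - (J - R) * Q‖_F² equals the infimum over all (M, J, R, Q) with Jᵀ = -J, R positive semidefinite, and Qᵀ * M positive semidefinite of ‖E - M‖_F² + ‖A - (J - R) * Q‖_F². -/
open Matrix

/-!
Only the inequality "positive definite infimum ≤ positive semidefinite infimum" needs an argument.
Given `(M, J, R, Q)` with `R` and `Qᵀ * M` positive semidefinite, the tuple is a limit of admissible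
tuples with `R` positive definite and `Q` invertible, so continuity of the objective suffices.

The approximating path, for small `t > 0`, is
`M' = M + t • W`, `R' = R + t • 1`, `Q' = Q + t • M'`,
where `W` satisfies `Qᵀ * W = 0` and `det (Q + W) ≠ 0` (`exists_complement`): `W` restricts to an
isomorphism from `ker Q` to `ker Qᵀ`. Then `Q'ᵀ * M' = Qᵀ * M + t • M'ᵀ * M'` is positive
semidefinite. If `Q' x = 0`, then `xᵀ Qᵀ M' x = -t ‖M' x‖²` while the left side is nonnegative,
so `M' x = 0` and `Q x = 0`, hence `(t • (Q + W) + M) x = 0`. The determinant of `t • (Q + W) + M`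
is a polynomial in `t` with leading coefficient `det (Q + W) ≠ 0`, hence nonzero for small `t > 0`.
-/

/-- A matrix `W` mapping `ker Q` isomorphically onto `ker Qᵀ` and with range inside `ker Qᵀ`. -/
lemma exists_complement {n : ℕ} (Q : Matrix (Fin n) (Fin n) ℝ) :
    ∃ W : Matrix (Fin n) (Fin n) ℝ, Qᵀ * W = 0 ∧ (Q + W).det ≠ 0 := by
  have hrank : Module.finrank ℝ (LinearMap.ker Q.mulVecLin) =
      Module.finrank ℝ (LinearMap.ker Qᵀ.mulVecLin) := by
    have h1 := Q.mulVecLin.finrank_range_add_finrank_ker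
    have h2 := Qᵀ.mulVecLin.finrank_range_add_finrank_ker
    have h3 := Q.rank_transpose
    unfold Matrix.rank at h3
    omega
  let e := LinearEquiv.ofFinrankEq _ _ hrank
  obtain ⟨g, hg⟩ := LinearMap.exists_extend e.toLinearMap
  let w := (LinearMap.ker Qᵀ.mulVecLin).subtype ∘ₗ g
  have hw : ∀ x, (LinearMap.toMatrix' w) *ᵥ x = (g x : Fin n → ℝ) := fun x => by
    rw [LinearMap.toMatrix'_mulVec]; rfl
  have hQw : ∀ x, Qᵀ *ᵥ (LinearMap.toMatrix' w *ᵥ x) = 0 := fun x => by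
    rw [hw]; exact (g x).2
  refine ⟨LinearMap.toMatrix' w, ?_, fun hdet => ?_⟩
  · apply Matrix.ext_of_mulVec_single
    intro i
    rw [← mulVec_mulVec, hQw, zero_mulVec]
  · obtain ⟨x, hx0, hx⟩ := exists_mulVec_eq_zero_iff.mpr hdet
    rw [add_mulVec] at hx
    have hQx : Q *ᵥ x = 0 := by
      have h := congrArg (Qᵀ *ᵥ ·) hx
      simp only [mulVec_add, hQw, add_zero, mulVec_zero, mulVec_mulVec] at h
      have := (conjTranspose_mul_self_mulVec_eq_zero Q x).mp (by simpa using h)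
      exact this
    rw [hQx, zero_add, hw] at hx
    have h := LinearMap.congr_fun hg ⟨x, hQx⟩
    have hex : e ⟨x, hQx⟩ = 0 := by
      rw [← Subtype.coe_inj]
      exact (congrArg Subtype.val h).symm.trans hx
    exact hx0 (congrArg Subtype.val ((LinearEquiv.map_eq_zero_iff e).mp hex))

lemma eventually_det_ne_zero {n : ℕ} (B M : Matrix (Fin n) (Fin n) ℝ) (hB : B.det ≠ 0) :
    ∀ᶠ t in nhdsWithin (0 : ℝ) (Set.Ioi 0), (t • B + M).det ≠ 0 := by
  let p : Polynomial ℝ := ((Polynomial.X : Polynomial ℝ) • B.map Polynomial.C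
    + M.map Polynomial.C).det
  have hp : p ≠ 0 := by
    intro h
    have := Polynomial.coeff_det_X_add_C_card B M
    change p.coeff _ = _ at this
    rw [h, Polynomial.coeff_zero] at this
    exact hB this.symm
  have hev : ∀ t, p.eval t = (t • B + M).det := fun t => by
    simp only [p]
    rw [← Polynomial.coe_evalRingHom, RingHom.map_det]
    congr 1
    ext i j
    simp
    ring
  have hfin : {t | p.IsRoot t}.Finite := Polynomial.finite_setOfPred_isRoot hp
  -- Finitely many roots: those other than `0` stay away from `0`.
  have hnhds : ({t | p.IsRoot t} \ {0})ᶜ ∈ nhds (0 : ℝ) :=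
    (hfin.subset Set.sdiff_subset).isClosed.isOpen_compl.mem_nhds (by simp)
  filter_upwards [self_mem_nhdsWithin, nhdsWithin_le_nhds hnhds] with t ht h hdet
  exact h ⟨(hev t).trans hdet, (ne_of_gt ht : t ≠ 0)⟩

lemma isUnit_add_smul {n : ℕ} {Q M : Matrix (Fin n) (Fin n) ℝ} {t : ℝ} (ht : 0 < t)
    (hQM : (Qᵀ * M).PosSemidef) (hker : ∀ x, Q *ᵥ x = 0 → M *ᵥ x = 0 → x = 0) :
    IsUnit (Q + t • M) := by
  rw [isUnit_iff_isUnit_det, isUnit_iff_ne_zero]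
  intro hdet
  obtain ⟨x, hx0, hx⟩ := exists_mulVec_eq_zero_iff.mpr hdet
  rw [add_mulVec, smul_mulVec] at hx
  have hQx : Q *ᵥ x = -(t • (M *ᵥ x)) := eq_neg_of_add_eq_zero_left hx
  have h := hQM.dotProduct_mulVec_nonneg x
  rw [star_trivial, ← mulVec_mulVec, dotProduct_mulVec, vecMul_transpose, hQx, neg_dotProduct,
    smul_dotProduct, smul_eq_mul] at h
  have hnn : 0 ≤ (M *ᵥ x) ⬝ᵥ (M *ᵥ x) := Finset.sum_nonneg fun i _ => mul_self_nonneg _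
  have hMx : M *ᵥ x = 0 := dotProduct_self_eq_zero.mp (by nlinarith)
  exact hx0 (hker x (by simp [hQx, hMx]) hMx)

/-- The distance of `(E, A)` to `𝕊_DH^{≻0}` equals the distance of `(E, A)` to
`𝕊_DH^{⪰0}` (squared Frobenius norms). -/
theorem inf_dh_pos_def_eq_inf_dh_psd {n : ℕ}
    (E A : Matrix (Fin n) (Fin n) ℝ) :
    sInf {v : ℝ | ∃ M J R Q : Matrix (Fin n) (Fin n) ℝ,
        Jᵀ = -J ∧ R.PosDef ∧ IsUnit Q ∧ (Qᵀ * M).PosSemidef ∧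
        v = (∑ i, ∑ j, ((E - M) i j) ^ 2) + (∑ i, ∑ j, ((A - (J - R) * Q) i j) ^ 2)} =
      sInf {v : ℝ | ∃ M J R Q : Matrix (Fin n) (Fin n) ℝ,
        Jᵀ = -J ∧ R.PosSemidef ∧ (Qᵀ * M).PosSemidef ∧
        v = (∑ i, ∑ j, ((E - M) i j) ^ 2) + (∑ i, ∑ j, ((A - (J - R) * Q) i j) ^ 2)} := by
  apply le_antisymm
  · apply le_csInf
    · exact ⟨_, 0, 0, 0, 0, by simp, PosSemidef.zero, by simpa using PosSemidef.zero, rfl⟩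
    rintro v ⟨M, J, R, Q, hJ, hR, hQM, rfl⟩
    obtain ⟨W, hQW, hdet⟩ := exists_complement Q
    let f : ℝ → ℝ := fun t => (∑ i, ∑ j, ((E - (M + t • W)) i j) ^ 2) +
      (∑ i, ∑ j, ((A - (J - (R + t • (1 : Matrix (Fin n) (Fin n) ℝ))) *
        (Q + t • (M + t • W))) i j) ^ 2)
    have hcont : Continuous f := by
      have h1 : Continuous fun t : ℝ => E - (M + t • W) := by fun_prop
      have h2 : Continuous fun t : ℝ => A - (J - (R + t • (1 : Matrix (Fin n) (Fin n) ℝ))) *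
        (Q + t • (M + t • W)) := by fun_prop
      exact (continuous_finsetSum _ fun i _ => continuous_finsetSum _ fun j _ =>
        (h1.matrix_elem i j).pow 2).add (continuous_finsetSum _ fun i _ =>
          continuous_finsetSum _ fun j _ => (h2.matrix_elem i j).pow 2)
    have hlim := (hcont.tendsto 0).mono_left (nhdsWithin_le_nhds (s := Set.Ioi 0))
    have hf0 : f 0 = (∑ i, ∑ j, ((E - M) i j) ^ 2) +
        (∑ i, ∑ j, ((A - (J - R) * Q) i j) ^ 2) := by simp [f]
    rw [← hf0]
    refine ge_of_tendsto hlim ?_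
    filter_upwards [self_mem_nhdsWithin, eventually_det_ne_zero (Q + W) M hdet] with t ht htdet
    have ht : 0 < t := ht
    have hQM' : (Qᵀ * (M + t • W)).PosSemidef := by
      rwa [mul_add, Matrix.mul_smul, hQW, smul_zero, add_zero]
    apply csInf_le
    · exact ⟨0, by rintro _ ⟨M, J, R, Q, -, -, -, -, rfl⟩; positivity⟩
    refine ⟨M + t • W, J, R + t • 1, Q + t • (M + t • W), hJ,
      PosDef.posSemidef_add hR (PosDef.one.smul ht), isUnit_add_smul ht hQM' ?_, ?_, rfl⟩
    · intro x hQx hMx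
      by_contra hx
      refine htdet (exists_mulVec_eq_zero_iff.mp ⟨x, hx, ?_⟩)
      rw [add_mulVec, smul_mulVec] at hMx
      rw [add_mulVec, smul_mulVec, add_mulVec, hQx, zero_add, add_comm, hMx]
    · rw [transpose_add, transpose_smul, add_mul, smul_mul]
      refine hQM'.add (PosSemidef.smul ?_ ht.le)
      simpa using posSemidef_conjTranspose_mul_self (M + t • W)
  · apply csInf_le_csInf
    · exact ⟨0, by rintro _ ⟨M, J, R, Q, -, -, -, rfl⟩; positivity⟩
    · exact ⟨_, 0, 0, 1, 1, by simp, PosDef.one, isUnit_one, by simpa using PosSemidef.zero, rfl⟩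
    · rintro v ⟨M, J, R, Q, hJ, hR, -, hQM, rfl⟩
      exact ⟨M, J, R, Q, hJ, hR.posSemidef, hQM, rfl⟩
end

section
/- Let E, A be real n×n matrices with E invertible and ‖E‖_F = 1. Then the infimum over all (M, J, R, Q) with Jᵀ = -J, R positive semidefinite, and Qᵀ * M positive semidefinite of ‖E - M‖_F² + ‖A - (J - R) * Q‖_F² is at most the infimum over all (J, R, P) with Jᵀ = -J, R positive semidefinite, and P positive semidefinite of ‖A * E⁻¹ - (J - R) * P‖_F². -/
/-!
Given a feasible triple `(J, R, P)` for the standard problem, the quadruple `(E, J, R, P * E)` is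
feasible for the pair problem: `(P E)ᵀ E = Eᵀ P E` is congruent to `P`. Its cost is
`‖A - (J - R) P E‖² = ‖(A E⁻¹ - (J - R) P) E‖²`, which by submultiplicativity of the Frobenius
norm (`sum_sq_mul_le`) and `‖E‖ = 1` is at most `‖A E⁻¹ - (J - R) P‖²`.
-/

open Matrix

/-- Submultiplicativity of the squared Frobenius norm. -/
theorem sum_sq_mul_le {n : ℕ} (B C : Matrix (Fin n) (Fin n) ℝ) :
    ∑ i, ∑ j, ((B * C) i j) ^ 2 ≤ (∑ i, ∑ j, (B i j) ^ 2) * (∑ i, ∑ j, (C i j) ^ 2) := by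
  rw [Finset.sum_comm (f := fun i j => (C i j) ^ 2), Finset.sum_mul_sum]
  refine Finset.sum_le_sum fun i _ => Finset.sum_le_sum fun j _ => ?_
  rw [Matrix.mul_apply]
  exact Finset.sum_mul_sq_le_sq_mul_sq _ _ _

/-- For invertible `E` with unit Frobenius norm, the distance of `(E, A)` to the DH pairs is
bounded above by the distance of `A E⁻¹` to the DH matrices. -/
theorem inf_dh_pair_le_inf_standard_reduction {n : ℕ}
    (E A : Matrix (Fin n) (Fin n) ℝ) (hE : IsUnit E)
    (hEnorm : Real.sqrt (∑ i, ∑ j, (E i j) ^ 2) = 1) :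
    sInf {v : ℝ | ∃ M J R Q : Matrix (Fin n) (Fin n) ℝ,
        Jᵀ = -J ∧ R.PosSemidef ∧ (Qᵀ * M).PosSemidef ∧
        v = (∑ i, ∑ j, ((E - M) i j) ^ 2) + (∑ i, ∑ j, ((A - (J - R) * Q) i j) ^ 2)} ≤
      sInf {v : ℝ | ∃ J R P : Matrix (Fin n) (Fin n) ℝ,
        Jᵀ = -J ∧ R.PosSemidef ∧ P.PosSemidef ∧
        v = ∑ i, ∑ j, ((A * E⁻¹ - (J - R) * P) i j) ^ 2} := by
  have hdet : IsUnit E.det := (Matrix.isUnit_iff_isUnit_det E).mp hE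
  have hE1 : ∑ i, ∑ j, (E i j) ^ 2 = 1 := Real.sqrt_eq_one.mp hEnorm
  refine le_csInf ⟨_, 0, 0, 0, by simp, Matrix.PosSemidef.zero, Matrix.PosSemidef.zero, rfl⟩ ?_
  rintro v ⟨J, R, P, hJ, hR, hP, rfl⟩
  have hPt : Pᵀ = P := by simpa using hP.isHermitian.eq
  refine le_trans (csInf_le ?_ ⟨E, J, R, P * E, hJ, hR, ?_, rfl⟩) ?_
  · refine ⟨0, ?_⟩
    rintro w ⟨M, J', R', Q, -, -, -, rfl⟩
    positivity
  · rw [Matrix.transpose_mul, hPt]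
    simpa using hP.conjTranspose_mul_mul_same E
  · have hfac : A - (J - R) * (P * E) = (A * E⁻¹ - (J - R) * P) * E := by
      rw [Matrix.sub_mul (A * E⁻¹), Matrix.mul_assoc A, Matrix.nonsing_inv_mul E hdet, Matrix.mul_one,
        Matrix.mul_assoc (J - R)]
    have h := sum_sq_mul_le (A * E⁻¹ - (J - R) * P) E
    rw [hE1, mul_one, ← hfac] at h
    simpa using h
end

section
/- Let A, E, J, R, H be real n×n matrices with H symmetric (Hᵀ = H), and define f(Q) = (1/2)‖A - (J - R) * Q‖_F² + (1/2)‖E - (Qᵀ)⁻¹ * H‖_F² for invertible Q. Then at every invertible real n×n matrix Q, f is Fréchet differentiable with derivative Δ ↦ trace(Gᵀ * Δ), where G = (J - R)ᵀ * ((J - R) * Q - A) + (Qᵀ)⁻¹ * H * (Eᵀ - H * Q⁻¹) * (Qᵀ)⁻¹; i.e., the gradient of f with respect to the Frobenius inner product ⟨X, Y⟩ = trace(Xᵀ * Y) is G. -/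
/-!
The derivative of `½‖F X‖_F²` is `Δ ↦ ⟨F Q, F' Δ⟩` for any differentiable matrix-valued `F`
(`hasFDerivAt_half_sq_frobenius`). It is applied to `F X = A - (J - R) X`, with derivative
`Δ ↦ -(J - R) Δ`, and to `F X = E - X⁻ᵀ H`, whose derivative `Δ ↦ (Q⁻¹ Δ Q⁻¹)ᵀ H` comes from
the derivative of inversion in the complete normed ring of matrices. Cyclicity of the trace and
the symmetry of `H` then bring both pairings to the form `trace (Gᵀ Δ)`.
-/

open Matrix

attribute [local instance] Matrix.frobeniusNormedAddCommGroup Matrix.frobeniusNormedSpace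

/-- A linear map on the space of square matrices, made continuous by finite-dimensionality. -/
noncomputable def matrixToCLM {n : ℕ} {V : Type*} [NormedAddCommGroup V] [NormedSpace ℝ V]
    (f : Matrix (Fin n) (Fin n) ℝ →ₗ[ℝ] V) : Matrix (Fin n) (Fin n) ℝ →L[ℝ] V :=
  LinearMap.toContinuousLinearMap f

theorem hasFDerivAt_half_sum_sq {n : ℕ} {V : Type*} [NormedAddCommGroup V]
    [NormedSpace ℝ V] {g : Fin n → Fin n → V → ℝ} {g' : Fin n → Fin n → V →L[ℝ] ℝ} {x : V}
    (hg : ∀ i j, HasFDerivAt (g i j) (g' i j) x) :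
    ∃ L : V →L[ℝ] ℝ, (∀ v, L v = ∑ i, ∑ j, g i j x * g' i j v) ∧
      HasFDerivAt (fun y => ((1 : ℝ) / 2) * ∑ i, ∑ j, (g i j y) ^ 2) L x := by
  refine ⟨∑ i, ∑ j, g i j x • g' i j, fun v => by simp [_root_.sum_apply], ?_⟩
  refine ((HasFDerivAt.fun_sum fun i _ => HasFDerivAt.fun_sum fun j _ =>
    (hg i j).pow 2).const_mul ((1 : ℝ) / 2)).congr_fderiv ?_
  simp only [Finset.smul_sum, smul_smul]
  refine Finset.sum_congr rfl fun i _ => Finset.sum_congr rfl fun j _ => ?_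
  congr 1
  simp

theorem hasFDerivAt_half_sq_frobenius {n : ℕ}
    {F : Matrix (Fin n) (Fin n) ℝ → Matrix (Fin n) (Fin n) ℝ}
    {F' : Matrix (Fin n) (Fin n) ℝ →L[ℝ] Matrix (Fin n) (Fin n) ℝ}
    {Q : Matrix (Fin n) (Fin n) ℝ} (hF : HasFDerivAt F F' Q) :
    ∃ L : Matrix (Fin n) (Fin n) ℝ →L[ℝ] ℝ,
      (∀ Δ, L Δ = ((F Q)ᵀ * F' Δ).trace) ∧
      HasFDerivAt (fun X => ((1 : ℝ) / 2) * ∑ i, ∑ j, (F X i j) ^ 2) L Q := by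
  have entry : ∀ i j, HasFDerivAt (fun X => F X i j)
      ((matrixToCLM (Matrix.entryLinearMap ℝ ℝ i j)).comp F') Q := fun i j =>
    (matrixToCLM (Matrix.entryLinearMap ℝ ℝ i j)).hasFDerivAt.comp Q hF
  obtain ⟨L, hL, hd⟩ := hasFDerivAt_half_sum_sq entry
  refine ⟨L, fun Δ => (hL Δ).trans ?_, hd⟩
  have h : ((F Q)ᵀ * F' Δ).trace = ∑ i, ∑ j, F Q i j * F' Δ i j := by
    rw [Finset.sum_comm]
    rfl
  exact h.symm

/-- The derivative of inversion at an invertible matrix `Q` is `Δ ↦ -Q⁻¹ Δ Q⁻¹`. -/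
theorem hasFDerivAt_matrix_inv {n : ℕ} {Q : Matrix (Fin n) (Fin n) ℝ} (hQ : IsUnit Q) :
    ∃ D : Matrix (Fin n) (Fin n) ℝ →L[ℝ] Matrix (Fin n) (Fin n) ℝ,
      (∀ Δ, D Δ = -(Q⁻¹ * Δ * Q⁻¹)) ∧
      HasFDerivAt (fun X : Matrix (Fin n) (Fin n) ℝ => X⁻¹) D Q := by
  let _ : NormedRing (Matrix (Fin n) (Fin n) ℝ) := Matrix.frobeniusNormedRing
  let _ : NormedAlgebra ℝ (Matrix (Fin n) (Fin n) ℝ) := Matrix.frobeniusNormedAlgebra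
  have : CompleteSpace (Matrix (Fin n) (Fin n) ℝ) := FiniteDimensional.complete ℝ _
  obtain ⟨u, rfl⟩ := hQ
  have h := hasFDerivAt_ringInverse (𝕜 := ℝ) u
  refine ⟨_, fun Δ => ?_, h.congr_of_eventuallyEq
    (Filter.Eventually.of_forall fun X => Matrix.nonsing_inv_eq_ringInverse X)⟩
  change -((u⁻¹ : (Matrix (Fin n) (Fin n) ℝ)ˣ) * Δ *
    ((u⁻¹ : (Matrix (Fin n) (Fin n) ℝ)ˣ) : Matrix (Fin n) (Fin n) ℝ)) = _
  rw [Matrix.coe_units_inv]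

/-- Gradient with respect to `Q` of
`f(Q) = ½‖A - (J-R)Q‖_F² + ½‖E - Q⁻ᵀ H‖_F²` at an invertible `Q`:
`f` is Fréchet differentiable at `Q` with derivative `Δ ↦ trace(Gᵀ Δ)` where
`G = (J-R)ᵀ ((J-R)Q - A) + Q⁻ᵀ H (Eᵀ - H Q⁻¹) Q⁻ᵀ`. -/
theorem gradient_of_f_wrt_Q {n : ℕ}
    (A E J R H Q : Matrix (Fin n) (Fin n) ℝ)
    (hH : Hᵀ = H) (hQ : IsUnit Q) :
    ∃ L : Matrix (Fin n) (Fin n) ℝ →L[ℝ] ℝ,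
      (∀ Δ : Matrix (Fin n) (Fin n) ℝ,
        L Δ = (((J - R)ᵀ * ((J - R) * Q - A) +
            (Qᵀ)⁻¹ * H * (Eᵀ - H * Q⁻¹) * (Qᵀ)⁻¹)ᵀ * Δ).trace) ∧
      HasFDerivAt (fun X : Matrix (Fin n) (Fin n) ℝ =>
          ((1 : ℝ) / 2) * (∑ i, ∑ j, ((A - (J - R) * X) i j) ^ 2) +
            ((1 : ℝ) / 2) * (∑ i, ∑ j, ((E - (Xᵀ)⁻¹ * H) i j) ^ 2))
        L Q := by
  obtain ⟨D, hD, hinv⟩ := hasFDerivAt_matrix_inv hQ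
  let M := matrixToCLM (LinearMap.mulLeft ℝ (J - R))
  have hM : ∀ X, M X = (J - R) * X := fun _ => rfl
  let T := matrixToCLM ((LinearMap.mulRight ℝ H).comp
    (Matrix.transposeLinearEquiv (Fin n) (Fin n) ℝ ℝ).toLinearMap)
  have hT : ∀ X, T X = Xᵀ * H := fun _ => rfl
  have h1 : HasFDerivAt (fun X : Matrix (Fin n) (Fin n) ℝ => A - (J - R) * X) (-M) Q :=
    M.hasFDerivAt.const_sub A
  have h2 : HasFDerivAt (fun X : Matrix (Fin n) (Fin n) ℝ => E - (Xᵀ)⁻¹ * H)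
      (-(T.comp D)) Q := by
    have := (T.hasFDerivAt.comp Q hinv).const_sub E
    refine this.congr_of_eventuallyEq (Filter.Eventually.of_forall fun X => ?_)
    simp [hT, Matrix.transpose_nonsing_inv]
  obtain ⟨L1, hL1, d1⟩ := hasFDerivAt_half_sq_frobenius h1
  obtain ⟨L2, hL2, d2⟩ := hasFDerivAt_half_sq_frobenius h2
  refine ⟨L1 + L2, fun Δ => ?_, d1.add d2⟩
  rw [_root_.add_apply, hL1, hL2, Matrix.transpose_add, Matrix.add_mul, Matrix.trace_add]
  congr 1
  · change ((A - (J - R) * Q)ᵀ * -((J - R) * Δ)).trace = _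
    rw [Matrix.transpose_mul, Matrix.transpose_transpose,
      ← neg_sub A, Matrix.transpose_neg, Matrix.mul_neg, Matrix.neg_mul, Matrix.neg_mul,
      Matrix.mul_assoc]
  · change ((E - Qᵀ⁻¹ * H)ᵀ * -((D Δ)ᵀ * H)).trace = _
    rw [hD, ← Matrix.trace_transpose]
    simp only [Matrix.transpose_mul, Matrix.transpose_neg, Matrix.transpose_sub,
      Matrix.transpose_transpose, Matrix.transpose_nonsing_inv, hH, Matrix.neg_mul,
      neg_neg]
    -- `trace (H (Q⁻¹ Δ Q⁻¹) (E - Q⁻ᵀ H)) = trace (Q⁻¹ (E - Q⁻ᵀ H) H Q⁻¹ Δ)` by cyclicity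
    have cyc : ∀ P S : Matrix (Fin n) (Fin n) ℝ,
        (H * (P * Δ * P) * S).trace = (P * (S * (H * P)) * Δ).trace := fun P S => by
      rw [show H * (P * Δ * P) * S = (H * P * Δ) * (P * S) by simp only [Matrix.mul_assoc],
        Matrix.trace_mul_comm]
      simp only [Matrix.mul_assoc]
    exact cyc _ _
end
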